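/- Let U, V ∈ SO(3), S = diag(s₁,s₂,s₃), A = U S Vᵀ, with z₁ = s₁−s₂−s₃, z₂ = s₂−s₁−s₃, z₃ = s₃−s₁−s₂, z₄ = s₁+s₂+s₃ and mᵢ ∈ S³ satisfying γ(mᵢ) = U Eᵢ Vᵀ. Let p_F be the matrix Fisher density on SO(3) with parameter A (relative to the Haar probability measure) and let p_B be the Bingham density on S³ with orientation columns m₁,…,m₄ and concentrations z₁,…,z₄ (relative to the surface measure). Then the differential entropies satisfy H(p_F) = H(p_B) − log(2π²), where H(p_F) = −∫_{SO(3)} p_F log p_F dR and H(p_B) = −∮_{S³} p_B log p_B dq. -/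

import Mathlib

/-! The map `γ : S³ → SO(3)` is onto (`gamma_surj`) and multiplicative for the quaternion product
(`gamma_mul`), so by uniqueness of Haar measure it carries the surface measure `σ` to `2π² ν`
(`map_gamma`). Along `γ` the Bingham exponent is the matrix Fisher exponent
(`bingham_eq_fisher`). Hence the normalizing constants differ by the factor `2π²`, that is
`p_B = (p_F ∘ γ) / 2π²` almost everywhere on the sphere, and
`∫ p_B log p_B dσ = ∫ p_F (log p_F − log 2π²) dν`, where `∫ p_F dν = 1`. -/

open Matrix MeasureTheory

/-- Borel/pi measurable structure on `3 × 3` real matrices. -/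
noncomputable instance : MeasurableSpace (Matrix (Fin 3) (Fin 3) ℝ) :=
  inferInstanceAs (MeasurableSpace (Fin 3 → Fin 3 → ℝ))

/-- The standard map from unit quaternions `q = (w,x,y,z) ∈ S³ ⊂ ℝ⁴` to rotation matrices. -/
noncomputable def gamma (q : Fin 4 → ℝ) : Matrix (Fin 3) (Fin 3) ℝ :=
  !![1 - 2*(q 2)^2 - 2*(q 3)^2, 2*(q 1)*(q 2) - 2*(q 0)*(q 3), 2*(q 1)*(q 3) + 2*(q 0)*(q 2);
     2*(q 1)*(q 2) + 2*(q 0)*(q 3), 1 - 2*(q 1)^2 - 2*(q 3)^2, 2*(q 2)*(q 3) - 2*(q 0)*(q 1);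
     2*(q 1)*(q 3) - 2*(q 0)*(q 2), 2*(q 2)*(q 3) + 2*(q 0)*(q 1), 1 - 2*(q 1)^2 - 2*(q 2)^2]

/-- `E₁ = diag(1,−1,−1)`, `E₂ = diag(−1,1,−1)`, `E₃ = diag(−1,−1,1)`, `E₄ = I₃`. -/
noncomputable def EMat : Fin 4 → Matrix (Fin 3) (Fin 3) ℝ :=
  ![Matrix.diagonal ![1, -1, -1], Matrix.diagonal ![-1, 1, -1],
    Matrix.diagonal ![-1, -1, 1], 1]

/-- `R ∈ SO(3)`: a `3 × 3` real orthogonal matrix with determinant `1`. -/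
def IsSO3 (R : Matrix (Fin 3) (Fin 3) ℝ) : Prop := Rᵀ * R = 1 ∧ R.det = 1

/-- The unit sphere `S³ ⊂ ℝ⁴`. -/
def unitSphere4 : Set (Fin 4 → ℝ) := {q | ∑ i, (q i)^2 = 1}

/-- `σ` is the surface measure on the unit sphere `S³ ⊂ ℝ⁴`: it is carried by the sphere,
invariant under the orthogonal group `O(4)`, and has total mass `2π²`. -/
def IsSphereMeasure (σ : Measure (Fin 4 → ℝ)) : Prop :=
  σ unitSphere4ᶜ = 0 ∧ σ Set.univ = ENNReal.ofReal (2 * Real.pi ^ 2) ∧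
    ∀ M : Matrix (Fin 4) (Fin 4) ℝ, Mᵀ * M = 1 → σ.map M.mulVec = σ

/-- `ν` is the Haar probability measure on `SO(3)` (viewed as a measure on `3 × 3` matrices):
a probability measure carried by `SO(3)` and invariant under left and right translation. -/
def IsHaarSO3 (ν : Measure (Matrix (Fin 3) (Fin 3) ℝ)) : Prop :=
  ν {R | IsSO3 R}ᶜ = 0 ∧ ν Set.univ = 1 ∧
    (∀ g, IsSO3 g → ν.map (fun R => g * R) = ν) ∧
    (∀ g, IsSO3 g → ν.map (fun R => R * g) = ν)

/-! ### The double cover `S³ → SO(3)` -/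

/-- For a unit quaternion `q` with `γ(q) = R`, the matrix `4 q qᵀ`; its entries are affine
functions of `R`. -/
def quatGram (R : Matrix (Fin 3) (Fin 3) ℝ) : Matrix (Fin 4) (Fin 4) ℝ :=
  !![1 + R 0 0 + R 1 1 + R 2 2, R 2 1 - R 1 2, R 0 2 - R 2 0, R 1 0 - R 0 1;
     R 2 1 - R 1 2, 1 + R 0 0 - R 1 1 - R 2 2, R 0 1 + R 1 0, R 0 2 + R 2 0;
     R 0 2 - R 2 0, R 0 1 + R 1 0, 1 - R 0 0 + R 1 1 - R 2 2, R 1 2 + R 2 1;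
     R 1 0 - R 0 1, R 0 2 + R 2 0, R 1 2 + R 2 1, 1 - R 0 0 - R 1 1 + R 2 2]

/-- `quatGram R` has rank one when `R` is a rotation. The `2 × 2` minors vanish because of the
orthonormality of the rows and of the columns of `R` together with `adj R = Rᵀ`. -/
lemma quatGram_rank_one {R : Matrix (Fin 3) (Fin 3) ℝ} (hR : IsSO3 R) (i j k : Fin 4) :
    quatGram R i j * quatGram R i k = quatGram R i i * quatGram R j k := by
  obtain ⟨h1, h2⟩ := hR
  have h3 : R * Rᵀ = 1 := mul_eq_one_comm.mp h1
  have h4 : R.adjugate = Rᵀ := by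
    have : R.adjugate * (R * Rᵀ) = Rᵀ := by
      rw [← Matrix.mul_assoc, Matrix.adjugate_mul, h2, one_smul, Matrix.one_mul]
    rwa [h3, Matrix.mul_one] at this
  have e1 := fun a b => congrFun (congrFun h1 a) b
  have e3 := fun a b => congrFun (congrFun h3 a) b
  have e4 := fun a b => congrFun (congrFun h4 a) b
  rw [Matrix.adjugate_fin_three] at e4
  have a00 := e1 0 0
  have a01 := e1 0 1
  have a02 := e1 0 2
  have a11 := e1 1 1
  have a12 := e1 1 2
  have a22 := e1 2 2
  have b00 := e3 0 0
  have b01 := e3 0 1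
  have b02 := e3 0 2
  have b11 := e3 1 1
  have b12 := e3 1 2
  have b22 := e3 2 2
  have c00 := e4 0 0
  have c01 := e4 0 1
  have c02 := e4 0 2
  have c10 := e4 1 0
  have c11 := e4 1 1
  have c12 := e4 1 2
  have c20 := e4 2 0
  have c21 := e4 2 1
  have c22 := e4 2 2
  simp [Matrix.mul_apply, Fin.sum_univ_three] at a00 a01 a02 a11 a12 a22 b00 b01 b02 b11 b12 b22
  simp at c00 c01 c02 c10 c11 c12 c20 c21 c22
  clear e1 e3 e4 h1 h2 h3 h4
  fin_cases i <;> fin_cases j <;> fin_cases k <;> simp [quatGram] <;> linarith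

/-- Every rotation comes from a unit quaternion, recovered from a nonzero row of `quatGram R`. -/
lemma gamma_surj {R : Matrix (Fin 3) (Fin 3) ℝ} (hR : IsSO3 R) :
    ∃ q ∈ unitSphere4, gamma q = R := by
  have key := quatGram_rank_one hR
  have htr : ∑ i, quatGram R i i = 4 := by
    simp [quatGram, Fin.sum_univ_four]; ring
  obtain ⟨i, hi⟩ : ∃ i, 0 < quatGram R i i := by
    by_contra! h
    have := Finset.sum_nonpos (fun i (_ : i ∈ Finset.univ) => h i)
    linarith
  have hs : 0 < √(quatGram R i i) := Real.sqrt_pos.mpr hi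
  have hss : √(quatGram R i i) ^ 2 = quatGram R i i := Real.sq_sqrt hi.le
  -- Since `quatGram R` is to be `4 q qᵀ`, any row with positive diagonal entry determines `q`
  -- up to sign.
  let q : Fin 4 → ℝ := fun j => quatGram R i j / (2 * √(quatGram R i i))
  have hq : ∀ j k, q j * q k = quatGram R j k / 4 := by
    intro j k
    have := key i j k
    simp only [q]
    rw [div_mul_div_comm, this]
    have : 2 * √(quatGram R i i) * (2 * √(quatGram R i i)) = 4 * quatGram R i i := by
      rw [← hss]; ring_nf; rw [Real.sqrt_sq hs.le]
    rw [this]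
    field_simp
  refine ⟨q, ?_, ?_⟩
  · have : ∑ j, q j ^ 2 = ∑ j, quatGram R j j / 4 :=
      Finset.sum_congr rfl fun j _ => by rw [sq, hq]
    change ∑ j, q j ^ 2 = 1
    rw [this, ← Finset.sum_div, htr]; norm_num
  · clear_value q
    ext a b
    fin_cases a <;> fin_cases b <;> simp [gamma, mul_assoc, sq, hq] <;> simp [quatGram] <;> ring

/-- Right multiplication by the quaternion `p`, as a matrix acting on `ℝ⁴`. -/
def quatRight (p : Fin 4 → ℝ) : Matrix (Fin 4) (Fin 4) ℝ :=
  !![p 0, -p 1, -p 2, -p 3;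
     p 1, p 0, p 3, -p 2;
     p 2, -p 3, p 0, p 1;
     p 3, p 2, -p 1, p 0]

lemma quatRight_orth {p : Fin 4 → ℝ} (hp : p ∈ unitSphere4) :
    (quatRight p)ᵀ * quatRight p = 1 := by
  have hp' : ∑ i, p i ^ 2 = 1 := hp
  rw [Fin.sum_univ_four] at hp'
  ext a b
  fin_cases a <;> fin_cases b <;>
    simp [quatRight, Matrix.mul_apply, Fin.sum_univ_four] <;> linarith

/-- `γ(q) γ(p) = γ(q p)`. Only valid on the unit sphere, as the diagonal of `gamma` is not
homogeneous in `q`. -/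
lemma gamma_mul {p q : Fin 4 → ℝ} (hp : p ∈ unitSphere4) (hq : q ∈ unitSphere4) :
    gamma q * gamma p = gamma (quatRight p *ᵥ q) := by
  have hp' : ∑ i, p i ^ 2 = 1 := hp
  have hq' : ∑ i, q i ^ 2 = 1 := hq
  rw [Fin.sum_univ_four] at hp' hq'
  have hp0 : p 0 ^ 2 = 1 - p 1 ^ 2 - p 2 ^ 2 - p 3 ^ 2 := by linarith
  have hq0 : q 0 ^ 2 = 1 - q 1 ^ 2 - q 2 ^ 2 - q 3 ^ 2 := by linarith
  ext a b
  fin_cases a <;> fin_cases b <;>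
    simp [gamma, quatRight, Matrix.mul_apply, Fin.sum_univ_four, Fin.sum_univ_three,
      Matrix.mulVec, dotProduct] <;> ring_nf <;> simp only [hp0, hq0] <;> ring

lemma gamma_isSO3 {q : Fin 4 → ℝ} (hq : q ∈ unitSphere4) : IsSO3 (gamma q) := by
  have hq' : ∑ i, q i ^ 2 = 1 := hq
  rw [Fin.sum_univ_four] at hq'
  constructor
  · ext a b
    fin_cases a <;> fin_cases b <;>
      simp [gamma, Matrix.mul_apply, Fin.sum_univ_three] <;> grind
  · rw [Matrix.det_fin_three]
    simp [gamma]
    grind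

lemma trace_gamma {p q : Fin 4 → ℝ} (hp : p ∈ unitSphere4) (hq : q ∈ unitSphere4) :
    ((gamma p)ᵀ * gamma q).trace = 4 * (∑ k, p k * q k) ^ 2 - 1 := by
  have hp' : ∑ i, p i ^ 2 = 1 := hp
  have hq' : ∑ i, q i ^ 2 = 1 := hq
  rw [Fin.sum_univ_four] at hp' hq'
  have hp0 : p 0 ^ 2 = 1 - p 1 ^ 2 - p 2 ^ 2 - p 3 ^ 2 := by linarith
  have hq0 : q 0 ^ 2 = 1 - q 1 ^ 2 - q 2 ^ 2 - q 3 ^ 2 := by linarith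
  simp [gamma, Matrix.mul_apply, Fin.sum_univ_four, Fin.sum_univ_three, Matrix.trace]
  ring_nf
  simp only [hp0, hq0]
  ring

/-- The Bingham exponent at `q` is the Fisher exponent at `γ(q)`: `tr(γ(mᵢ)ᵀγ(q)) = 4(mᵢ·q)² − 1`,
and `∑ zᵢ = 0`, `∑ zᵢ Eᵢ = 4 diag(s)`. -/
lemma bingham_eq_fisher {U V : Matrix (Fin 3) (Fin 3) ℝ} (s : Fin 3 → ℝ)
    {m : Fin 4 → Fin 4 → ℝ} (hm_unit : ∀ i, ∑ k, (m i k)^2 = 1)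
    (hm : ∀ i, gamma (m i) = U * EMat i * Vᵀ) {q : Fin 4 → ℝ} (hq : q ∈ unitSphere4) :
    ∑ i, (![s 0 - s 1 - s 2, s 1 - s 0 - s 2, s 2 - s 0 - s 1, s 0 + s 1 + s 2] : Fin 4 → ℝ) i
      * (∑ k, m i k * q k)^2 = ((U * Matrix.diagonal s * Vᵀ)ᵀ * gamma q).trace := by
  set z : Fin 4 → ℝ := ![s 0 - s 1 - s 2, s 1 - s 0 - s 2, s 2 - s 0 - s 1, s 0 + s 1 + s 2]
    with hz
  have hzE : ∑ i, z i • EMat i = (4 : ℝ) • Matrix.diagonal s := by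
    ext a b
    fin_cases a <;> fin_cases b <;>
      simp [hz, EMat, Fin.sum_univ_four] <;> ring
  have h4 : (4 : ℝ) • ((U * Matrix.diagonal s * Vᵀ)ᵀ * gamma q).trace
      = ∑ i, z i * ((gamma (m i))ᵀ * gamma q).trace := by
    rw [← Matrix.trace_smul, ← Matrix.smul_mul, ← Matrix.transpose_smul, ← Matrix.smul_mul,
      ← Matrix.mul_smul, ← hzE, Matrix.mul_sum, Matrix.sum_mul, Matrix.transpose_sum,
      Matrix.sum_mul, Matrix.trace_sum]
    refine Finset.sum_congr rfl fun i _ => ?_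
    rw [hm]
    simp
  have h5 : ∑ i, z i * ((gamma (m i))ᵀ * gamma q).trace
      = 4 * ∑ i, z i * (∑ k, m i k * q k)^2 - ∑ i, z i := by
    rw [Finset.mul_sum, ← Finset.sum_sub_distrib]
    refine Finset.sum_congr rfl fun i _ => ?_
    rw [trace_gamma (hm_unit i) hq]
    ring
  have h6 : ∑ i, z i = 0 := by simp [hz, Fin.sum_univ_four]; ring
  rw [h5, h6, smul_eq_mul] at h4
  linarith

/-! ### Pushing the surface measure forward to Haar measure -/

lemma measurable_entry (a b : Fin 3) :
    Measurable (fun R : Matrix (Fin 3) (Fin 3) ℝ => R a b) :=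
  (measurable_pi_apply b).comp (measurable_pi_apply (X := fun _ : Fin 3 => Fin 3 → ℝ) a)

lemma measurable_of_entries {α : Type*} [MeasurableSpace α]
    {f : α → Matrix (Fin 3) (Fin 3) ℝ} (h : ∀ a b, Measurable fun x => f x a b) :
    Measurable f :=
  measurable_pi_lambda (X := fun _ : Fin 3 => Fin 3 → ℝ) f fun a => measurable_pi_lambda _ (h a)

lemma measurable_gamma : Measurable gamma := by
  refine measurable_of_entries fun a b => ?_
  fin_cases a <;> fin_cases b <;> simp [gamma] <;> fun_prop

lemma measurable_mul_pair :
    Measurable (fun x : Matrix (Fin 3) (Fin 3) ℝ × Matrix (Fin 3) (Fin 3) ℝ => x.1 * x.2) := by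
  refine measurable_of_entries fun a b => ?_
  simp only [Matrix.mul_apply]
  exact Finset.measurable_sum _ fun c _ =>
    ((measurable_entry a c).comp measurable_fst).mul ((measurable_entry c b).comp measurable_snd)

/-- Uniqueness of Haar measure, in the form needed here: average `f(γ(q) R)` over both `q` and
`R`. Integrating over `R` first gives the `ν`-integral of `f`; integrating over `q` first gives
the `σ`-integral of `f ∘ γ`, because `R = γ(p)` for some `p` and `q ↦ q p` preserves `σ`. -/
lemma map_gamma {σ : Measure (Fin 4 → ℝ)} (hσ : IsSphereMeasure σ)
    {ν : Measure (Matrix (Fin 3) (Fin 3) ℝ)} (hν : IsHaarSO3 ν) :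
    σ.map gamma = ENNReal.ofReal (2 * Real.pi ^ 2) • ν := by
  obtain ⟨hσ1, hσ2, hσ3⟩ := hσ
  obtain ⟨hν1, hν2, hν3, -⟩ := hν
  have : IsProbabilityMeasure ν := ⟨hν2⟩
  have : IsFiniteMeasure σ := ⟨by rw [hσ2]; exact ENNReal.ofReal_lt_top⟩
  have hσae : ∀ᵐ q ∂σ, q ∈ unitSphere4 := hσ1
  have hνae : ∀ᵐ R ∂ν, IsSO3 R := hν1
  refine Measure.ext_of_lintegral _ fun f hf => ?_
  rw [lintegral_map hf measurable_gamma, lintegral_smul_measure, smul_eq_mul]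
  have hmeas : Measurable (fun x : (Fin 4 → ℝ) × Matrix (Fin 3) (Fin 3) ℝ =>
      f (gamma x.1 * x.2)) :=
    hf.comp (measurable_mul_pair.comp
      ((measurable_gamma.comp measurable_fst).prodMk measurable_snd))
  have hL : ∫⁻ q, ∫⁻ R, f (gamma q * R) ∂ν ∂σ
      = ENNReal.ofReal (2 * Real.pi ^ 2) * ∫⁻ R, f R ∂ν := by
    have : ∀ᵐ q ∂σ, ∫⁻ R, f (gamma q * R) ∂ν = ∫⁻ R, f R ∂ν := by
      filter_upwards [hσae] with q hq
      conv_rhs => rw [← hν3 _ (gamma_isSO3 hq)]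
      have hmul : Measurable fun R => gamma q * R :=
        measurable_mul_pair.comp (measurable_const.prodMk measurable_id)
      rw [lintegral_map hf hmul]
    rw [lintegral_congr_ae this, lintegral_const, hσ2, mul_comm]
  have hRt : ∫⁻ R, ∫⁻ q, f (gamma q * R) ∂σ ∂ν = ∫⁻ q, f (gamma q) ∂σ := by
    have : ∀ᵐ R ∂ν, ∫⁻ q, f (gamma q * R) ∂σ = ∫⁻ q, f (gamma q) ∂σ := by
      filter_upwards [hνae] with R hR
      obtain ⟨p, hp, rfl⟩ := gamma_surj hR
      conv_rhs => rw [← hσ3 _ (quatRight_orth hp)]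
      have hvec : Measurable (quatRight p).mulVec :=
        (Continuous.matrix_mulVec continuous_const continuous_id).measurable
      have hfg : Measurable fun q => f (gamma q) := hf.comp measurable_gamma
      rw [lintegral_map hfg hvec]
      refine lintegral_congr_ae ?_
      filter_upwards [hσae] with q hq
      rw [gamma_mul hp hq]
    rw [lintegral_congr_ae this, lintegral_const, hν2, mul_one]
  rw [← hL, ← hRt]
  exact (lintegral_lintegral_swap hmeas.aemeasurable).symm

/-- No integrability is needed: both sides vanish together when `f` is not integrable. -/
lemma integral_gamma {σ : Measure (Fin 4 → ℝ)} (hσ : IsSphereMeasure σ)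
    {ν : Measure (Matrix (Fin 3) (Fin 3) ℝ)} (hν : IsHaarSO3 ν)
    {f : Matrix (Fin 3) (Fin 3) ℝ → ℝ} (hf : Measurable f) :
    ∫ q, f (gamma q) ∂σ = (2 * Real.pi ^ 2) * ∫ R, f R ∂ν := by
  rw [← integral_map measurable_gamma.aemeasurable hf.aestronglyMeasurable, map_gamma hσ hν,
    integral_smul_measure, ENNReal.toReal_ofReal (by positivity), smul_eq_mul]

/-! ### Comparison of the entropies -/

lemma measurable_trace (A : Matrix (Fin 3) (Fin 3) ℝ) :
    Measurable (fun R : Matrix (Fin 3) (Fin 3) ℝ => (Aᵀ * R).trace) := by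
  simp only [Matrix.trace, Matrix.diag, Matrix.mul_apply]
  exact Finset.measurable_sum _ fun a _ => Finset.measurable_sum _ fun b _ =>
    (measurable_entry b a).const_mul _

lemma abs_trace_le (A : Matrix (Fin 3) (Fin 3) ℝ) {R : Matrix (Fin 3) (Fin 3) ℝ}
    (hR : IsSO3 R) : |(Aᵀ * R).trace| ≤ ∑ a, ∑ b, |A b a| := by
  have hent : ∀ a b, |R b a| ≤ 1 := by
    intro a b
    have h := congrFun (congrFun hR.1 a) a
    simp only [Matrix.mul_apply, Matrix.transpose_apply, Matrix.one_apply_eq] at h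
    have h2 : R b a * R b a ≤ 1 := by
      rw [← h]
      exact Finset.single_le_sum (f := fun c => R c a * R c a)
        (fun c _ => mul_self_nonneg _) (Finset.mem_univ b)
    exact abs_le_one_iff_mul_self_le_one.mpr h2
  simp only [Matrix.trace, Matrix.diag, Matrix.mul_apply, Matrix.transpose_apply]
  refine (Finset.abs_sum_le_sum_abs _ _).trans (Finset.sum_le_sum fun a _ => ?_)
  refine (Finset.abs_sum_le_sum_abs _ _).trans (Finset.sum_le_sum fun b _ => ?_)
  rw [abs_mul]
  exact mul_le_of_le_one_right (abs_nonneg _) (hent a b)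

/-- With `p_F` the matrix Fisher density on `SO(3)` with parameter `A = U S Vᵀ` (relative to
the Haar probability measure) and `p_B` the Bingham density on `S³` with orientation columns
`m₁,…,m₄` (where `γ(mᵢ) = U Eᵢ Vᵀ`) and concentrations `z₁,…,z₄` (relative to the surface
measure), the differential entropies satisfy `H(p_F) = H(p_B) − log(2π²)`. -/
theorem stmt_13 (σ : Measure (Fin 4 → ℝ)) (hσ : IsSphereMeasure σ)
    (ν : Measure (Matrix (Fin 3) (Fin 3) ℝ)) (hν : IsHaarSO3 ν)
    (U V : Matrix (Fin 3) (Fin 3) ℝ) (hU : IsSO3 U) (hV : IsSO3 V)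
    (s : Fin 3 → ℝ) (A : Matrix (Fin 3) (Fin 3) ℝ) (hA : A = U * Matrix.diagonal s * Vᵀ)
    (z : Fin 4 → ℝ)
    (hz : z = ![s 0 - s 1 - s 2, s 1 - s 0 - s 2, s 2 - s 0 - s 1, s 0 + s 1 + s 2])
    (m : Fin 4 → Fin 4 → ℝ) (hm_unit : ∀ i, ∑ k, (m i k)^2 = 1)
    (hm : ∀ i, gamma (m i) = U * EMat i * Vᵀ)
    (pF : Matrix (Fin 3) (Fin 3) ℝ → ℝ)
    (hpF : ∀ R, pF R = Real.exp ((Aᵀ * R).trace) / ∫ R', Real.exp ((Aᵀ * R').trace) ∂ν)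
    (pB : (Fin 4 → ℝ) → ℝ)
    (hpB : ∀ q, pB q = Real.exp (∑ i, z i * (∑ k, m i k * q k)^2) /
        ∫ q', Real.exp (∑ i, z i * (∑ k, m i k * q' k)^2) ∂σ) :
    -∫ R, pF R * Real.log (pF R) ∂ν
      = (-∫ q, pB q * Real.log (pB q) ∂σ) - Real.log (2 * Real.pi ^ 2) := by
  subst hz
  set c : ℝ := 2 * Real.pi ^ 2 with hc
  have hc0 : 0 < c := by positivity
  have : IsProbabilityMeasure ν := ⟨hν.2.1⟩
  have hσae : ∀ᵐ q ∂σ, q ∈ unitSphere4 := hσ.1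
  have hνae : ∀ᵐ R ∂ν, IsSO3 R := hν.1
  have hmT := measurable_trace A
  set T : Matrix (Fin 3) (Fin 3) ℝ → ℝ := fun R => (Aᵀ * R).trace with hT
  set C : ℝ := ∑ a, ∑ b, |A b a|
  have hTC : ∀ᵐ R ∂ν, |T R| ≤ C := by
    filter_upwards [hνae] with R hR using abs_trace_le A hR
  have hiE : Integrable (fun R => Real.exp (T R)) ν := by
    refine Integrable.of_bound (Real.measurable_exp.comp hmT).aestronglyMeasurable
      (Real.exp C) ?_
    filter_upwards [hTC] with R hR
    rw [Real.norm_eq_abs, Real.abs_exp]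
    exact Real.exp_le_exp.mpr ((le_abs_self _).trans hR)
  set Z : ℝ := ∫ R, Real.exp (T R) ∂ν with hZ
  have hZ0 : 0 < Z := integral_exp_pos hiE
  have hpF' : ∀ R, pF R = Real.exp (T R) / Z := hpF
  have hpFpos : ∀ R, 0 < pF R := fun R => by rw [hpF']; positivity
  have hmpF : Measurable pF := by
    rw [funext hpF']
    exact (Real.measurable_exp.comp hmT).div_const _
  have hlog : ∀ R, Real.log (pF R) = T R - Real.log Z := fun R => by
    rw [hpF', Real.log_div (Real.exp_ne_zero _) hZ0.ne', Real.log_exp]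
  have hipF : Integrable pF ν := by
    rw [funext hpF']
    exact hiE.div_const _
  have hpF1 : ∫ R, pF R ∂ν = 1 := by
    simp only [hpF']
    rw [integral_div, ← hZ, div_self hZ0.ne']
  have hilog : Integrable (fun R => pF R * Real.log (pF R)) ν := by
    refine hipF.mul_bdd (c := C + |Real.log Z|)
      (Real.measurable_log.comp hmpF).aestronglyMeasurable ?_
    filter_upwards [hTC] with R hR
    rw [hlog, Real.norm_eq_abs]
    exact (abs_sub _ _).trans (by gcongr)
  have hexp : ∀ᵐ q ∂σ, ∑ i, (![s 0 - s 1 - s 2, s 1 - s 0 - s 2, s 2 - s 0 - s 1,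
      s 0 + s 1 + s 2] : Fin 4 → ℝ) i * (∑ k, m i k * q k)^2 = T (gamma q) := by
    filter_upwards [hσae] with q hq
    rw [bingham_eq_fisher s hm_unit hm hq, hT, hA]
  have hZB : ∫ q', Real.exp (∑ i, (![s 0 - s 1 - s 2, s 1 - s 0 - s 2, s 2 - s 0 - s 1,
      s 0 + s 1 + s 2] : Fin 4 → ℝ) i * (∑ k, m i k * q' k)^2) ∂σ = c * Z := by
    have hmE : Measurable fun R => Real.exp (T R) := Real.measurable_exp.comp hmT
    rw [hZ, hc, ← integral_gamma hσ hν hmE]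
    refine integral_congr_ae ?_
    filter_upwards [hexp] with q hq
    rw [hq]
  have hpBF : ∀ᵐ q ∂σ, pB q * Real.log (pB q)
      = pF (gamma q) / c * Real.log (pF (gamma q) / c) := by
    filter_upwards [hexp] with q hq
    have : pB q = pF (gamma q) / c := by
      rw [hpB, hZB, hq, hpF', div_div, mul_comm Z c]
    rw [this]
  have hmG : Measurable fun R => pF R / c * Real.log (pF R / c) :=
    (hmpF.div_const c).mul (Real.measurable_log.comp (hmpF.div_const c))
  have hG : ∀ R, pF R / c * Real.log (pF R / c)
      = (pF R * Real.log (pF R) - pF R * Real.log c) / c := fun R => by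
    rw [Real.log_div (hpFpos R).ne' hc0.ne']; ring
  rw [integral_congr_ae hpBF, integral_gamma hσ hν hmG]
  simp only [hG]
  rw [integral_div, integral_sub hilog (hipF.mul_const _), integral_mul_const, hpF1, ← hc]
  field_simp
  ring
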